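/- Let Λ_a ⊆ P = ℤ[x_1,…,x_a] be the subring of symmetric polynomials, acting on P by multiplication. Then every Λ_a-module endomorphism of P lies in the subring of End_{Λ_a}(P) generated by the multiplication operators M_1,…,M_a (where M_j(f) = x_j·f) together with the divided difference operators ∂_1,…,∂_{a−1}; that is, these operators generate End_{Λ_a}(P) as a ring. -/

import Mathlib

/-! The multiplication operators `M_j` and the divided difference operators
`∂_i` generate `End_{Λ_a}(P)` as a ring, where `P = ℤ[x_1,…,x_a]` and `Λ_a` is
the subring of symmetric polynomials.  Variables are 0-indexed by `Fin a`. -/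

open MvPolynomial

/-!
Let `S` be the ring generated by the operators and `N` the largest left ideal of `End_Λ(P)` inside
`S`. It is stable under right multiplication by `S`, and `1 ∈ N` is what we want. An element
`z ∈ S` with values in `Λ` lies in `N`, because `φ ∘ z` is `z` followed by multiplication by `φ 1`.

By descending induction on `m`, the same holds for every `z ∈ S` whose values are killed by
`∂_i` for `i + 1 < m` and which commutes with `x_k` for `k ≥ m`; the case `m = 0`, `z = 1` is the
goal. For such a `z`, the nil-Hecke relations show that `∂_0 ⋯ ∂_{m-1} z` satisfies the condition
for `m + 1`, hence lies in `N`, and that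
`∂_{j+1} ⋯ ∂_{m-1} z = x_j (∂_j ⋯ ∂_{m-1} z) - (∂_j ⋯ ∂_{m-1} z) x_m`,
which strips off the `∂_j` one at a time until only `z` is left.
-/

/-- Nil-Hecke relations for `d 0, …, d (a - 2)` and `x 0, …, x (a - 1)` in a ring: those among the
`d i`, and those moving `d i` past an `x k` with `i < k`. Indices run over `ℕ` so that `d` and `x`
can be shifted freely; values outside these ranges are unconstrained. -/
structure NilHeckeRelations {A : Type*} [Ring A] (a : ℕ) (d x : ℕ → A) : Prop where
  sq_eq_zero : ∀ i, i + 1 < a → d i * d i = 0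
  commute : ∀ i j, i + 1 < j → j + 1 < a → Commute (d i) (d j)
  braid : ∀ i, i + 2 < a → d i * d (i + 1) * d i = d (i + 1) * d i * d (i + 1)
  mul_x_succ : ∀ i, i + 1 < a → d i * x (i + 1) = x i * d i - 1
  commute_x : ∀ i k, i + 1 < k → k < a → Commute (d i) (x k)

/-- The product `d j * d (j + 1) * ⋯ * d (j + n - 1)`. -/
def ascendingProd {A : Type*} [Monoid A] (d : ℕ → A) : ℕ → ℕ → A
  | _, 0 => 1
  | j, n + 1 => d j * ascendingProd d (j + 1) n

section AscendingProd

variable {A : Type*} [Monoid A] (d : ℕ → A)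

theorem ascendingProd_zero (j : ℕ) : ascendingProd d j 0 = 1 := rfl

theorem ascendingProd_succ (j n : ℕ) :
    ascendingProd d j (n + 1) = d j * ascendingProd d (j + 1) n := rfl

variable {d}

theorem ascendingProd_mem {S : Submonoid A} {j n : ℕ}
    (hd : ∀ i, j ≤ i → i < j + n → d i ∈ S) : ascendingProd d j n ∈ S := by
  induction n generalizing j with
  | zero => exact S.one_mem
  | succ n ih =>
    exact S.mul_mem (hd j le_rfl (by lia)) (ih fun i hji hin => hd i (by lia) (by lia))

theorem commute_ascendingProd {y : A} {j n : ℕ}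
    (hy : ∀ i, j ≤ i → i < j + n → Commute y (d i)) : Commute y (ascendingProd d j n) := by
  induction n generalizing j with
  | zero => exact Commute.one_right y
  | succ n ih =>
    exact (hy j le_rfl (by lia)).mul_right (ih fun i hji hin => hy i (by lia) (by lia))

end AscendingProd

namespace NilHeckeRelations

variable {A : Type*} [Ring A] {a : ℕ} {d x : ℕ → A} {m : ℕ} {z : A}

theorem mul_ascendingProd_mul_eq_zero (h : NilHeckeRelations a d x) (hm : m < a)
    (hz : ∀ i, i + 1 < m → d i * z = 0) {i j n : ℕ} (hn : j + n = m) (hji : j ≤ i) (him : i < m) :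
    d i * (ascendingProd d j n * z) = 0 := by
  induction n generalizing j with
  | zero => lia
  | succ n ih =>
    obtain rfl | rfl | hlt : i = j ∨ i = j + 1 ∨ j + 1 < i := by lia
    · rw [ascendingProd_succ, ← mul_assoc, ← mul_assoc, h.sq_eq_zero i (by lia), zero_mul, zero_mul]
    · obtain ⟨n, rfl⟩ : ∃ k, n = k + 1 := ⟨n - 1, by lia⟩
      have hcomm : Commute (d j) (ascendingProd d (j + 2) n) :=
        commute_ascendingProd fun i _ _ => h.commute j i (by lia) (by lia)
      calc d (j + 1) * (ascendingProd d j (n + 2) * z)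
          = d (j + 1) * d j * d (j + 1) * (ascendingProd d (j + 2) n * z) := by
            simp only [ascendingProd_succ, mul_assoc]
        _ = d j * d (j + 1) * (ascendingProd d (j + 2) n * (d j * z)) := by
            rw [← h.braid j (by lia), mul_assoc (d j * d (j + 1)), ← mul_assoc (d j), hcomm.eq,
              mul_assoc (ascendingProd _ _ _)]
        _ = 0 := by rw [hz j (by lia), mul_zero, mul_zero]
    · rw [ascendingProd_succ, mul_assoc, ← mul_assoc, ← (h.commute j i hlt (by lia)).eq, mul_assoc,
        ih (by lia) (by lia), mul_zero]

theorem ascendingProd_mul_x_mul (h : NilHeckeRelations a d x) (hm : m < a)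
    (hz : ∀ i, i + 1 < m → d i * z = 0) {j n : ℕ} (hn : j + n + 1 = m) :
    ascendingProd d j (n + 1) * (x m * z) =
      x j * (ascendingProd d j (n + 1) * z) - ascendingProd d (j + 1) n * z := by
  induction n generalizing j with
  | zero =>
    subst hn
    simp only [ascendingProd_succ, ascendingProd_zero, mul_one, one_mul, add_zero]
    rw [← mul_assoc, h.mul_x_succ j hm, sub_mul, one_mul, mul_assoc]
  | succ n ih =>
    have hcomm : Commute (d j) (ascendingProd d (j + 2) n) :=
      commute_ascendingProd fun i _ _ => h.commute j i (by lia) (by lia)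
    have hkill : d j * (ascendingProd d (j + 2) n * z) = 0 := by
      rw [← mul_assoc, hcomm.eq, mul_assoc, hz j (by lia), mul_zero]
    calc ascendingProd d j (n + 2) * (x m * z)
        = d j * (x (j + 1) * (ascendingProd d (j + 1) (n + 1) * z) -
            ascendingProd d (j + 2) n * z) := by
          rw [ascendingProd_succ, mul_assoc, ih (by lia)]
      _ = (x j * d j - 1) * (ascendingProd d (j + 1) (n + 1) * z) := by
          rw [mul_sub, hkill, sub_zero, ← mul_assoc, h.mul_x_succ j (by lia)]
      _ = x j * (ascendingProd d j (n + 2) * z) - ascendingProd d (j + 1) (n + 1) * z := by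
          rw [sub_mul, one_mul, ascendingProd_succ d j, mul_assoc, mul_assoc]

theorem mem_of_ascendingProd_mul_mem (h : NilHeckeRelations a d x) (hm : m < a)
    {N : Ideal A} (hNx : ∀ j < a, ∀ y ∈ N, y * x j ∈ N)
    (hz : ∀ i, i + 1 < m → d i * z = 0) (hcomm : Commute (x m) z)
    (hmem : ascendingProd d 0 m * z ∈ N) : z ∈ N := by
  suffices hall : ∀ j n, j + n = m → ascendingProd d j n * z ∈ N by
    simpa only [ascendingProd_zero, one_mul] using hall m 0 rfl
  intro j
  induction j with
  | zero =>
    intro n hn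
    rwa [show n = m by lia]
  | succ j ih =>
    intro n hn
    have hsucc : ascendingProd d j (n + 1) * z ∈ N := ih (n + 1) (by lia)
    have hsplit : ascendingProd d (j + 1) n * z =
        x j * (ascendingProd d j (n + 1) * z) - ascendingProd d j (n + 1) * z * x m := by
      rw [mul_assoc _ z, ← hcomm.eq, h.ascendingProd_mul_x_mul hm hz (by lia), sub_sub_cancel]
    rw [hsplit]
    exact sub_mem (N.mul_mem_left _ hsucc) (hNx m hm _ hsucc)

theorem one_mem_of_forall_annihilated_mem (h : NilHeckeRelations a d x) {S : Submonoid A}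
    (hS : ∀ i, i + 1 < a → d i ∈ S) {N : Ideal A} (hNx : ∀ j < a, ∀ y ∈ N, y * x j ∈ N)
    (hN : ∀ z ∈ S, (∀ i, i + 1 < a → d i * z = 0) → z ∈ N) : (1 : A) ∈ N := by
  suffices hmem : ∀ m ≤ a, ∀ z ∈ S, (∀ i, i + 1 < m → d i * z = 0) →
      (∀ k, m ≤ k → k < a → Commute (x k) z) → z ∈ N from
    hmem 0 a.zero_le 1 S.one_mem (by lia) fun k _ _ => Commute.one_right _
  intro m hm
  induction hm using Nat.decreasingInduction with
  | self => exact fun z hzS hz _ => hN z hzS hz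
  | of_succ m hm ih =>
    intro z hzS hz hcomm
    refine h.mem_of_ascendingProd_mul_mem hm hNx hz (hcomm m le_rfl hm) (ih _ ?_ ?_ ?_)
    · exact S.mul_mem (ascendingProd_mem fun i _ hi => hS i (by lia)) hzS
    · exact fun i hi => h.mul_ascendingProd_mul_eq_zero hm hz (zero_add m) i.zero_le (by lia)
    · intro k hk hka
      have hchain : Commute (x k) (ascendingProd d 0 m) :=
        commute_ascendingProd fun i _ hi => (h.commute_x i k (by lia) hka).symm
      exact hchain.mul_right (hcomm k (by lia) hka)

end NilHeckeRelations

section DividedDifference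

variable {σ R : Type*} [CommRing R]

theorem isLeftRegular_X_sub_X {i j : σ} (hij : i ≠ j) :
    IsLeftRegular (X i - X j : MvPolynomial σ R) := by
  classical
  let shear (c : MvPolynomial σ R) : MvPolynomial σ R →ₐ[R] MvPolynomial σ R :=
    aeval (Function.update X i (X i + c))
  have shear_X_sub_X : shear (X j) (X i - X j) = X i := by
    simp [shear, hij.symm]
  have shear_neg_comp_shear : (shear (-X j)).comp (shear (X j)) = AlgHom.id R _ := by
    refine algHom_ext fun k => ?_
    obtain rfl | hk := eq_or_ne k i
    · simp [shear, hij.symm]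
    · simp [shear, hk]
  have shear_injective : Function.Injective (shear (X j)) :=
    Function.LeftInverse.injective (g := shear (-X j)) fun f => by
      rw [← AlgHom.comp_apply, shear_neg_comp_shear, AlgHom.id_apply]
  intro f g hfg
  refine shear_injective (isRegular_X.left (c := X i) ?_)
  simpa only [map_mul, shear_X_sub_X] using congrArg (shear (X j)) hfg

variable [DecidableEq σ] {A : Type*} [CommSemiring A] [Algebra A (MvPolynomial σ R)]

/-- `D` is the divided difference operator `f ↦ (f - s f) / (X i - X j)`, where `s` exchanges the
variables `i` and `j`. The scalars `A` over which `D` is linear are arbitrary. -/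
def IsDividedDifference (i j : σ) (D : Module.End A (MvPolynomial σ R)) : Prop :=
  ∀ f, (X i - X j) * D f = f - rename (Equiv.swap i j) f

namespace IsDividedDifference

variable {i j k l : σ} {D D' : Module.End A (MvPolynomial σ R)}

theorem apply_eq_zero_iff (hD : IsDividedDifference i j D) (hij : i ≠ j) {f : MvPolynomial σ R} :
    D f = 0 ↔ rename (Equiv.swap i j) f = f := by
  rw [← (isLeftRegular_X_sub_X hij).mul_left_eq_zero_iff, hD f, sub_eq_zero, eq_comm]

theorem rename_swap_apply (hD : IsDividedDifference i j D) (hij : i ≠ j) (f : MvPolynomial σ R) :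
    rename (Equiv.swap i j) (D f) = D f :=
  isLeftRegular_X_sub_X hij <| by
    have hswap : rename (Equiv.swap i j) (rename (Equiv.swap i j) f) = f := by
      rw [rename_rename, ← Equiv.Perm.coe_mul, Equiv.swap_mul_self, Equiv.Perm.coe_one,
        rename_id_apply]
    have h := congrArg (rename (Equiv.swap i j)) (hD f)
    rw [map_mul, map_sub, map_sub, rename_X, rename_X, Equiv.swap_apply_left,
      Equiv.swap_apply_right, hswap] at h
    linear_combination -h - hD f

theorem apply_C (hD : IsDividedDifference i j D) (hij : i ≠ j) (r : R) : D (C r) = 0 :=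
  (hD.apply_eq_zero_iff hij).2 (rename_C _ r)

theorem apply_X_left_mul (hD : IsDividedDifference i j D) (hij : i ≠ j) (f : MvPolynomial σ R) :
    D (X i * f) = X j * D f + f :=
  isLeftRegular_X_sub_X hij <| by
    have h := hD (X i * f)
    rw [map_mul (rename _), rename_X, Equiv.swap_apply_left] at h
    linear_combination h - X j * hD f

theorem apply_X_right_mul (hD : IsDividedDifference i j D) (hij : i ≠ j) (f : MvPolynomial σ R) :
    D (X j * f) = X i * D f - f :=
  isLeftRegular_X_sub_X hij <| by
    have h := hD (X j * f)
    rw [map_mul (rename _), rename_X, Equiv.swap_apply_right] at h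
    linear_combination h - X i * hD f

theorem apply_X_mul_of_ne (hD : IsDividedDifference i j D) (hij : i ≠ j) (hki : k ≠ i)
    (hkj : k ≠ j) (f : MvPolynomial σ R) : D (X k * f) = X k * D f :=
  isLeftRegular_X_sub_X hij <| by
    have h := hD (X k * f)
    rw [map_mul (rename _), rename_X, Equiv.swap_apply_of_ne_of_ne hki hkj] at h
    linear_combination h - X k * hD f

theorem mul_self (hD : IsDividedDifference i j D) (hij : i ≠ j) : D * D = 0 := by
  ext f : 1
  exact (hD.apply_eq_zero_iff hij).2 (hD.rename_swap_apply hij f)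

theorem commute (hD : IsDividedDifference i j D) (hD' : IsDividedDifference k l D') (hij : i ≠ j)
    (hkl : k ≠ l) (hik : i ≠ k) (hil : i ≠ l) (hjk : j ≠ k) (hjl : j ≠ l) : Commute D D' := by
  ext f : 1
  simp only [Module.End.mul_apply]
  induction f using MvPolynomial.induction_on with
  | C r => simp only [hD.apply_C hij, hD'.apply_C hkl, map_zero]
  | add p q hp hq => simp only [map_add, hp, hq]
  | mul_X p n hp =>
    rw [mul_comm]
    obtain rfl | hni := eq_or_ne n i
    · simp [hD.apply_X_left_mul hij, hD'.apply_X_mul_of_ne hkl, *]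
    obtain rfl | hnj := eq_or_ne n j
    · simp [hD.apply_X_right_mul hij, hD'.apply_X_mul_of_ne hkl, *]
    obtain rfl | hnk := eq_or_ne n k
    · simp [hD'.apply_X_left_mul hkl, hD.apply_X_mul_of_ne hij, hil.symm, hjl.symm, *]
    obtain rfl | hnl := eq_or_ne n l
    · simp [hD'.apply_X_right_mul hkl, hD.apply_X_mul_of_ne hij, hik.symm, hjk.symm, *]
    simp [hD.apply_X_mul_of_ne hij, hD'.apply_X_mul_of_ne hkl, *]

theorem braid (hD : IsDividedDifference i j D) (hD' : IsDividedDifference j k D') (hij : i ≠ j)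
    (hjk : j ≠ k) (hik : i ≠ k) : D * D' * D = D' * D * D' := by
  have sq (f : MvPolynomial σ R) : D (D f) = 0 := DFunLike.congr_fun (hD.mul_self hij) f
  have sq' (f : MvPolynomial σ R) : D' (D' f) = 0 := DFunLike.congr_fun (hD'.mul_self hjk) f
  have X_i (f : MvPolynomial σ R) : D' (X i * f) = X i * D' f :=
    hD'.apply_X_mul_of_ne hjk hij hik f
  have X_k (f : MvPolynomial σ R) : D (X k * f) = X k * D f :=
    hD.apply_X_mul_of_ne hij hik.symm hjk.symm f
  -- Both sides vanish on constants and pick up the same terms when a variable is moved out to the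
  -- left, so they agree by induction on the degree.
  ext f : 1
  simp only [Module.End.mul_apply]
  induction f using MvPolynomial.induction_on with
  | C r => simp only [hD.apply_C hij, hD'.apply_C hjk, map_zero]
  | add p q hp hq => simp only [map_add, hp, hq]
  | mul_X p n hp =>
    rw [mul_comm]
    obtain rfl | hni := eq_or_ne n i
    · simp [hD.apply_X_left_mul hij, hD'.apply_X_left_mul hjk, hp, X_i, X_k, sq, sq']
    obtain rfl | hnj := eq_or_ne n j
    · simp only [hD.apply_X_right_mul hij, hD.apply_X_left_mul hij, hD'.apply_X_left_mul hjk,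
        hD'.apply_X_right_mul hjk, hp, X_i, X_k, map_add, map_sub]
      ring
    obtain rfl | hnk := eq_or_ne n k
    · simp [hD.apply_X_right_mul hij, hD'.apply_X_right_mul hjk, hp, X_i, X_k, sq, sq']
    simp [hD.apply_X_mul_of_ne hij, hD'.apply_X_mul_of_ne hjk, *]

theorem mul_mulLeft_X_right (hD : IsDividedDifference i j D) (hij : i ≠ j) :
    D * LinearMap.mulLeft A (X j) = LinearMap.mulLeft A (X i) * D - 1 := by
  ext f : 1
  exact hD.apply_X_right_mul hij f

theorem commute_mulLeft_X (hD : IsDividedDifference i j D) (hij : i ≠ j) (hki : k ≠ i)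
    (hkj : k ≠ j) : Commute D (LinearMap.mulLeft A (X k)) := by
  ext f : 1
  exact hD.apply_X_mul_of_ne hij hki hkj f

end IsDividedDifference

end DividedDifference

theorem mulLeft_mem_adjoin_mulLeft_X {σ R A : Type*} [CommSemiring R] [CommSemiring A] [Algebra R A]
    [Algebra A (MvPolynomial σ R)] [IsScalarTower R A (MvPolynomial σ R)] (p : MvPolynomial σ R) :
    LinearMap.mulLeft A p ∈
      Algebra.adjoin R (Set.range fun j : σ => LinearMap.mulLeft A (X j : MvPolynomial σ R)) := by
  let μ : MvPolynomial σ R →ₐ[R] Module.End A (MvPolynomial σ R) :=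
    (Algebra.lmul A (MvPolynomial σ R)).restrictScalars R
  have hmem : μ p ∈ (Algebra.adjoin R (Set.range X)).map μ := by
    rw [adjoin_range_X]
    exact ⟨p, Algebra.mem_top, rfl⟩
  rwa [AlgHom.map_adjoin, ← Set.range_comp] at hmem

section LeftConductor

variable {E : Type*} [Ring E]

/-- The largest left ideal of `E` contained in the subring `S`. It is stable under right
multiplication by `S`, and it contains `1` only if `S` is everything. -/
def leftConductor (S : Subring E) : Ideal E where
  carrier := {z | ∀ φ : E, φ * z ∈ S}
  add_mem' hy hz φ := by
    rw [mul_add]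
    exact add_mem (hy φ) (hz φ)
  zero_mem' φ := by
    rw [mul_zero]
    exact zero_mem S
  smul_mem' ψ z hz φ := by
    rw [smul_eq_mul, ← mul_assoc]
    exact hz (φ * ψ)

theorem mul_mem_leftConductor {S : Subring E} {z s : E} (hz : z ∈ leftConductor S) (hs : s ∈ S) :
    z * s ∈ leftConductor S := fun φ => by
  rw [← mul_assoc]
  exact mul_mem (hz φ) hs

theorem eq_top_of_one_mem_leftConductor {S : Subring E} (h : 1 ∈ leftConductor S) : S = ⊤ :=
  eq_top_iff.2 fun φ _ => mul_one φ ▸ h φ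

theorem mem_leftConductor_of_forall_mem_range_algebraMap {L P : Type*} [CommRing L] [CommRing P]
    [Algebra L P] {S : Subring (Module.End L P)} (hS : ∀ p, LinearMap.mulLeft L p ∈ S)
    {z : Module.End L P} (hzS : z ∈ S) (hz : ∀ f, z f ∈ (algebraMap L P).range) :
    z ∈ leftConductor S := by
  intro φ
  have hφz : φ * z = LinearMap.mulLeft L (φ 1) * z := by
    ext f
    obtain ⟨c, hc⟩ := hz f
    rw [Module.End.mul_apply, Module.End.mul_apply, LinearMap.mulLeft_apply, ← hc,
      Algebra.algebraMap_eq_smul_one, map_smul, mul_smul_one]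
  rw [hφz]
  exact mul_mem (hS (φ 1)) hzS

end LeftConductor

section Adjacent

variable {R : Type*} [CommRing R] {a : ℕ}

theorem isSymmetric_of_forall_rename_swap_succ {f : MvPolynomial (Fin a) R}
    (hf : ∀ (i : ℕ) (hi : i + 1 < a), rename (Equiv.swap ⟨i, by lia⟩ ⟨i + 1, hi⟩) f = f) :
    f.IsSymmetric := by
  intro τ
  obtain _ | n := a
  · rw [Subsingleton.elim τ 1, Equiv.Perm.coe_one, rename_id_apply]
  have hτ : τ ∈ Submonoid.closure (Set.range fun i : Fin n => Equiv.swap i.castSucc i.succ) := by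
    rw [Equiv.Perm.mclosure_swap_castSucc_succ]
    exact Submonoid.mem_top τ
  induction hτ using Submonoid.closure_induction with
  | mem τ hτ =>
    obtain ⟨i, rfl⟩ := hτ
    exact hf i (by lia)
  | one => rw [Equiv.Perm.coe_one, rename_id_apply]
  | mul τ ρ _ _ hτ hρ => rw [Equiv.Perm.coe_mul, ← rename_rename, hρ, hτ]

theorem nilHeckeRelations_of_isDividedDifference {A : Type*} [CommSemiring A]
    [Algebra A (MvPolynomial (Fin a) R)] {d x : ℕ → Module.End A (MvPolynomial (Fin a) R)}
    (hd : ∀ (i : ℕ) (hi : i + 1 < a), IsDividedDifference ⟨i, by lia⟩ ⟨i + 1, hi⟩ (d i))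
    (hx : ∀ (k : ℕ) (hk : k < a), x k = LinearMap.mulLeft A (X ⟨k, hk⟩)) :
    NilHeckeRelations a d x where
  sq_eq_zero i hi := (hd i hi).mul_self (by simp)
  commute i j hij hj := (hd i (by lia)).commute (hd j hj) (by simp) (by simp)
    (Fin.ne_of_val_ne (by lia)) (Fin.ne_of_val_ne (by lia)) (Fin.ne_of_val_ne (by lia))
    (Fin.ne_of_val_ne (by lia))
  braid i hi := (hd i (by lia)).braid (hd (i + 1) hi) (by simp) (by simp)
    (Fin.ne_of_val_ne (by lia))
  mul_x_succ i hi := by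
    rw [hx i (by lia), hx (i + 1) hi]
    exact (hd i hi).mul_mulLeft_X_right (by simp)
  commute_x i k hik hk := by
    rw [hx k hk]
    exact (hd i (by lia)).commute_mulLeft_X (by simp) (Fin.ne_of_val_ne (by lia))
      (Fin.ne_of_val_ne (by lia))

theorem eq_top_of_mulLeft_mem_of_isDividedDifference_mem
    {S : Subring (Module.End (symmetricSubalgebra (Fin a) R) (MvPolynomial (Fin a) R))}
    (hS : ∀ p, LinearMap.mulLeft _ p ∈ S)
    {d : ℕ → Module.End (symmetricSubalgebra (Fin a) R) (MvPolynomial (Fin a) R)}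
    (hd : ∀ (i : ℕ) (hi : i + 1 < a), IsDividedDifference ⟨i, by lia⟩ ⟨i + 1, hi⟩ (d i))
    (hdS : ∀ i, i + 1 < a → d i ∈ S) : S = ⊤ := by
  obtain ⟨x, hx⟩ : ∃ x : ℕ → Module.End (symmetricSubalgebra (Fin a) R) (MvPolynomial (Fin a) R),
      ∀ (k : ℕ) (hk : k < a), x k = LinearMap.mulLeft _ (X ⟨k, hk⟩) :=
    ⟨fun k => if hk : k < a then LinearMap.mulLeft _ (X ⟨k, hk⟩) else 0, fun k hk => dif_pos hk⟩
  have relations : NilHeckeRelations a d x := nilHeckeRelations_of_isDividedDifference hd hx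
  refine eq_top_of_one_mem_leftConductor <|
    relations.one_mem_of_forall_annihilated_mem (S := S.toSubmonoid) hdS ?_ ?_
  · intro k hk z hz
    exact mul_mem_leftConductor hz (hx k hk ▸ hS _)
  · intro z hzS hdz
    refine mem_leftConductor_of_forall_mem_range_algebraMap hS hzS fun f => ?_
    have hsymm : (z f).IsSymmetric := isSymmetric_of_forall_rename_swap_succ fun i hi =>
      ((hd i hi).apply_eq_zero_iff (by simp)).1 (DFunLike.congr_fun (hdz i hi) f)
    exact ⟨⟨z f, hsymm⟩, rfl⟩

end Adjacent

theorem subringClosure_eq_top_of_adjoin_int_eq_top {E : Type*} [Ring E] [Algebra ℤ E] {s : Set E}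
    (h : Algebra.adjoin ℤ s = ⊤) : Subring.closure s = ⊤ := by
  refine eq_top_iff.2 fun z _ => ?_
  have hz : z ∈ Algebra.adjoin ℤ s := h ▸ Algebra.mem_top
  induction hz using Algebra.adjoin_induction with
  | mem y hy => exact Subring.subset_closure hy
  | algebraMap n =>
    rw [eq_intCast]
    exact intCast_mem _ n
  | add y z _ _ hy hz => exact add_mem (hy trivial) (hz trivial)
  | mul y z _ _ hy hz => exact mul_mem (hy trivial) (hz trivial)

theorem stmt7_general {R : Type*} [CommRing R] (a : ℕ)
    (D : (i : ℕ) → i + 1 < a →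
      Module.End (symmetricSubalgebra (Fin a) R) (MvPolynomial (Fin a) R))
    (hD : ∀ (i : ℕ) (hi : i + 1 < a),
      IsDividedDifference ⟨i, by lia⟩ ⟨i + 1, hi⟩ (D i hi)) :
    Algebra.adjoin R
      (Set.range (fun j : Fin a => LinearMap.mulLeft (symmetricSubalgebra (Fin a) R) (X j))
        ∪ {g | ∃ (i : ℕ) (hi : i + 1 < a), g = D i hi}) = ⊤ := by
  obtain ⟨d, hdD⟩ : ∃ d : ℕ → Module.End (symmetricSubalgebra (Fin a) R) (MvPolynomial (Fin a) R),
      ∀ (i : ℕ) (hi : i + 1 < a), d i = D i hi :=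
    ⟨fun i => if hi : i + 1 < a then D i hi else 0, fun i hi => dif_pos hi⟩
  rw [← Subalgebra.toSubring_inj, Algebra.top_toSubring]
  refine eq_top_of_mulLeft_mem_of_isDividedDifference_mem (d := d) ?_ ?_ ?_
  · exact fun p => Algebra.adjoin_mono Set.subset_union_left (mulLeft_mem_adjoin_mulLeft_X p)
  · exact fun i hi => hdD i hi ▸ hD i hi
  · exact fun i hi => Algebra.subset_adjoin (.inr ⟨i, hi, hdD i hi⟩)

theorem stmt7 (a : ℕ) (ha : 1 ≤ a)
    -- a family of Λ_a-linear operators satisfying the divided-difference property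
    (D : (i : ℕ) → i + 1 < a →
      (MvPolynomial (Fin a) ℤ →ₗ[↥(MvPolynomial.symmetricSubalgebra (Fin a) ℤ)]
        MvPolynomial (Fin a) ℤ))
    (hD : ∀ (i : ℕ) (hi : i + 1 < a) (f : MvPolynomial (Fin a) ℤ),
      (X (⟨i, by omega⟩ : Fin a) - X (⟨i + 1, hi⟩ : Fin a)) * D i hi f =
        f - rename (Equiv.swap (⟨i, by omega⟩ : Fin a) (⟨i + 1, hi⟩ : Fin a)) f) :
    Subring.closure
      (Set.range (fun j : Fin a =>
          (LinearMap.mulLeft ↥(MvPolynomial.symmetricSubalgebra (Fin a) ℤ) (X j) :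
            Module.End ↥(MvPolynomial.symmetricSubalgebra (Fin a) ℤ)
              (MvPolynomial (Fin a) ℤ)))
        ∪ {g | ∃ (i : ℕ) (hi : i + 1 < a), g = D i hi}) = ⊤ :=
  subringClosure_eq_top_of_adjoin_int_eq_top (stmt7_general a D hD)
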